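/- Let A, B be symmetric n×n real matrices. Suppose the identity permutation is optimal for the QAP, i.e., Σ_{i,j} A_{ij}B_{σ(i)σ(j)} ≥ Σ_{i,j} A_{ij}B_{ij} for all permutations σ of [n]. Suppose there exists 𝐙 ∈ ℝ^{n²×n²} such that: (i) 𝐙_{(i,k),(j,l)} ≥ 0 whenever (i ≠ j and k ≠ l) or (i = j and k = l); (ii) 𝐙_{(i,i),(j,j)} = 0 for all i,j; (iii) A⊗B − 𝐙 ∈ 𝒮; and (iv) A⊗B − 𝐙 ∈ 𝒯. Then (I, vec(I)vec(I)ᵀ) is an optimal solution to the SDP relaxation, and the optimal value of the SDP relaxation equals the QAP value Σ_{i,j} A_{ij}B_{ij}. -/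

import Mathlib

open Matrix BigOperators

noncomputable section

/-- `vec(X)` indexed by pairs `(i,k)` with `vec(X)_(i,k) = X i k`. -/
def vecM {n : ℕ} (X : Matrix (Fin n) (Fin n) ℝ) : Fin n × Fin n → ℝ :=
  fun p => X p.1 p.2

/-- Kronecker product indexed so that `(A ⊗ B) (i,k) (j,l) = A i j * B k l`. -/
def kron {n : ℕ} (A B : Matrix (Fin n) (Fin n) ℝ) :
    Matrix (Fin n × Fin n) (Fin n × Fin n) ℝ :=
  Matrix.of fun p q => A p.1 q.1 * B p.2 q.2

/-- The all-ones `n × n` matrix. -/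
def Eall (n : ℕ) : Matrix (Fin n) (Fin n) ℝ :=
  Matrix.of fun _ _ => (1 : ℝ)

/-- `X` is doubly stochastic. -/
def DS {n : ℕ} (X : Matrix (Fin n) (Fin n) ℝ) : Prop :=
  (∀ i, ∑ j, X i j = 1) ∧ (∀ j, ∑ i, X i j = 1) ∧ (∀ i j, 0 ≤ X i j)

/-- Feasibility of the pair `(X, Y)` for the SDP relaxation of the QAP. -/
def SDPFeasible {n : ℕ} (X : Matrix (Fin n) (Fin n) ℝ)
    (Y : Matrix (Fin n × Fin n) (Fin n × Fin n) ℝ) : Prop :=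
  (Y - vecMulVec (vecM X) (vecM X)).PosSemidef ∧
  (∀ k l, ∑ i, ∑ j, Y (i, k) (j, l) = 1) ∧
  (∀ k l, ∑ i, ∑ j, Y (k, i) (l, j) = 1) ∧
  (∀ k i j, i ≠ j → Y (i, k) (j, k) = 0) ∧
  (∀ k i j, i ≠ j → Y (k, i) (k, j) = 0) ∧
  (∀ p q, 0 ≤ Y p q) ∧
  DS X

/-- The SDP objective `⟨A ⊗ B, Y⟩`. -/
def sdpObj {n : ℕ} (A B : Matrix (Fin n) (Fin n) ℝ)
    (Y : Matrix (Fin n × Fin n) (Fin n × Fin n) ℝ) : ℝ :=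
  ∑ p, ∑ q, kron A B p q * Y p q

/-- The set `𝒮`: closure of matrices `Y` such that `G⊗E + E⊗H + Y` is PSD for some `G, H`. -/
def Scone (n : ℕ) : Set (Matrix (Fin n × Fin n) (Fin n × Fin n) ℝ) :=
  closure {Y | ∃ G H : Matrix (Fin n) (Fin n) ℝ,
    (kron G (Eall n) + kron (Eall n) H + Y).PosSemidef}

/-- The set `𝒯`. -/
def Tcone (n : ℕ) : Set (Matrix (Fin n × Fin n) (Fin n × Fin n) ℝ) :=
  {Y | ∀ X : Matrix (Fin n) (Fin n) ℝ, DS X →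
    ∑ p, ∑ q, vecM X p * Y p q * vecM X q ≥
      ∑ p, ∑ q, vecM (1 : Matrix (Fin n) (Fin n) ℝ) p * Y p q *
        vecM (1 : Matrix (Fin n) (Fin n) ℝ) q}

/-!
Let `C` be the cost matrix (`A ⊗ B` for the QAP), let `Y` be feasible with first-order part `X`,
write `x = vec X` and `e = vec I`, and split
`⟨C, Y⟩ = ⟨Z, Y⟩ + ⟨C - Z, Y - x xᵀ⟩ + ⟨C - Z, x xᵀ⟩`.
The first term is nonnegative because `Z ≥ 0` on the support of `Y`. For the second, `C - Z` is a
limit of matrices `N` with `G ⊗ E + E ⊗ H + N` positive semidefinite, and `Y - x xᵀ` is positive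
semidefinite with vanishing block sums, hence orthogonal to `G ⊗ E + E ⊗ H`. Membership of `C - Z`
in `𝒯` bounds the third term below by `⟨C - Z, e eᵀ⟩`, which equals `⟨C, e eᵀ⟩` since `Z` vanishes
on the support of `e eᵀ`.
-/

section FrobeniusInner

variable {ι κ : Type*} [Fintype ι] [Fintype κ]

/-- The Frobenius inner product `⟨M, N⟩` of real matrices, as a sum over entries so that `sdpObj`
unfolds to it. -/
def frobInner (M N : Matrix ι κ ℝ) : ℝ :=
  ∑ p, ∑ q, M p q * N p q

theorem frobInner_add_left (M M' N : Matrix ι κ ℝ) :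
    frobInner (M + M') N = frobInner M N + frobInner M' N := by
  simp only [frobInner, Matrix.add_apply, add_mul, Finset.sum_add_distrib]

theorem frobInner_sub_left (M M' N : Matrix ι κ ℝ) :
    frobInner (M - M') N = frobInner M N - frobInner M' N := by
  simp only [frobInner, Matrix.sub_apply, sub_mul, Finset.sum_sub_distrib]

theorem frobInner_sub_right (M N N' : Matrix ι κ ℝ) :
    frobInner M (N - N') = frobInner M N - frobInner M N' := by
  simp only [frobInner, Matrix.sub_apply, mul_sub, Finset.sum_sub_distrib]

theorem frobInner_vecMulVec (M : Matrix ι κ ℝ) (x : ι → ℝ) (y : κ → ℝ) :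
    frobInner M (vecMulVec x y) = ∑ p, ∑ q, x p * M p q * y q := by
  simp only [frobInner, vecMulVec_apply, mul_left_comm, mul_assoc]

theorem continuous_frobInner_left (N : Matrix ι κ ℝ) :
    Continuous fun M : Matrix ι κ ℝ => frobInner M N := by
  unfold frobInner
  fun_prop

theorem frobInner_nonneg_of_posSemidef {M N : Matrix ι ι ℝ} (hM : M.PosSemidef)
    (hN : N.PosSemidef) : 0 ≤ frobInner M N := by
  have schur : 0 ≤ (1 : ι → ℝ) ⬝ᵥ (M ⊙ N) *ᵥ 1 :=
    (hM.hadamard hN).dotProduct_mulVec_nonneg 1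
  simpa [frobInner, dotProduct, mulVec] using schur

end FrobeniusInner

theorem permMatrix_apply {ι R : Type*} [DecidableEq ι] [Zero R] [One R] (σ : Equiv.Perm ι)
    (i j : ι) : σ.permMatrix R i j = if σ i = j then 1 else 0 := by
  simp only [PEquiv.toMatrix_apply, Equiv.toPEquiv_apply, Option.mem_some_iff]

section Relaxation

variable {n : ℕ}

theorem frobInner_kron_Eall (G : Matrix (Fin n) (Fin n) ℝ)
    (D : Matrix (Fin n × Fin n) (Fin n × Fin n) ℝ) :
    frobInner (kron G (Eall n)) D = ∑ i, ∑ j, G i j * ∑ k, ∑ l, D (i, k) (j, l) := by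
  simp only [frobInner, kron, Eall, of_apply, mul_one, Fintype.sum_prod_type, Finset.mul_sum]
  exact Finset.sum_congr rfl fun i _ => Finset.sum_comm

theorem frobInner_Eall_kron (H : Matrix (Fin n) (Fin n) ℝ)
    (D : Matrix (Fin n × Fin n) (Fin n × Fin n) ℝ) :
    frobInner (kron (Eall n) H) D = ∑ k, ∑ l, H k l * ∑ i, ∑ j, D (i, k) (j, l) := by
  simp only [frobInner, kron, Eall, of_apply, one_mul, Fintype.sum_prod_type_right,
    Finset.mul_sum]
  exact Finset.sum_congr rfl fun k _ => Finset.sum_comm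

theorem frobInner_nonneg_of_mem_Scone {M D : Matrix (Fin n × Fin n) (Fin n × Fin n) ℝ}
    (hM : M ∈ Scone n) (hD : D.PosSemidef)
    (hcol : ∀ k l, ∑ i, ∑ j, D (i, k) (j, l) = 0)
    (hrow : ∀ i j, ∑ k, ∑ l, D (i, k) (j, l) = 0) :
    0 ≤ frobInner M D := by
  have hclosed : IsClosed {M | 0 ≤ frobInner M D} :=
    isClosed_le continuous_const (continuous_frobInner_left D)
  refine closure_minimal ?_ hclosed hM
  rintro N ⟨G, H, hN⟩
  have hG : frobInner (kron G (Eall n)) D = 0 := by simp [frobInner_kron_Eall, hrow]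
  have hH : frobInner (kron (Eall n) H) D = 0 := by simp [frobInner_Eall_kron, hcol]
  calc 0 ≤ frobInner (kron G (Eall n) + kron (Eall n) H + N) D :=
        frobInner_nonneg_of_posSemidef hN hD
    _ = frobInner N D := by rw [frobInner_add_left, frobInner_add_left, hG, hH, zero_add, zero_add]

theorem DS.sum_row_vecMulVec {X : Matrix (Fin n) (Fin n) ℝ} (hX : DS X) (i j : Fin n) :
    ∑ k, ∑ l, vecMulVec (vecM X) (vecM X) (i, k) (j, l) = 1 := by
  simp only [vecMulVec_apply, vecM, ← Finset.sum_mul_sum, hX.1, one_mul]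

theorem DS.sum_col_vecMulVec {X : Matrix (Fin n) (Fin n) ℝ} (hX : DS X) (k l : Fin n) :
    ∑ i, ∑ j, vecMulVec (vecM X) (vecM X) (i, k) (j, l) = 1 := by
  simp only [vecMulVec_apply, vecM, ← Finset.sum_mul_sum, hX.2.1, one_mul]

theorem ds_permMatrix (σ : Equiv.Perm (Fin n)) : DS (σ.permMatrix ℝ) := by
  obtain ⟨hnonneg, hrow, hcol⟩ :=
    mem_doublyStochastic_iff_sum.mp (permMatrix_mem_doublyStochastic (R := ℝ) (σ := σ))
  exact ⟨hrow, hcol, hnonneg⟩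

theorem sdpFeasible_permMatrix (σ : Equiv.Perm (Fin n)) :
    SDPFeasible (σ.permMatrix ℝ) (vecMulVec (vecM (σ.permMatrix ℝ)) (vecM (σ.permMatrix ℝ))) := by
  have hσ : DS (σ.permMatrix ℝ) := ds_permMatrix σ
  refine ⟨by simpa only [sub_self] using PosSemidef.zero, hσ.sum_col_vecMulVec,
    hσ.sum_row_vecMulVec, fun k i j hij => ?_, fun k i j hij => ?_,
    fun p q => mul_nonneg (hσ.2.2 _ _) (hσ.2.2 _ _), hσ⟩
  · have hne : ¬(σ i = k ∧ σ j = k) := fun h => hij (σ.injective (h.1.trans h.2.symm))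
    simp only [vecMulVec_apply, vecM, permMatrix_apply, ite_zero_mul_ite_zero, if_neg hne]
  · have hne : ¬(σ k = i ∧ σ k = j) := fun h => hij (h.1.symm.trans h.2)
    simp only [vecMulVec_apply, vecM, permMatrix_apply, ite_zero_mul_ite_zero, if_neg hne]

theorem frobInner_vecMulVec_permMatrix (M : Matrix (Fin n × Fin n) (Fin n × Fin n) ℝ)
    (σ : Equiv.Perm (Fin n)) :
    frobInner M (vecMulVec (vecM (σ.permMatrix ℝ)) (vecM (σ.permMatrix ℝ))) =
      ∑ i, ∑ j, M (i, σ i) (j, σ j) := by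
  simp [frobInner_vecMulVec, vecM, Fintype.sum_prod_type]

namespace SDPFeasible

variable {X : Matrix (Fin n) (Fin n) ℝ} {Y : Matrix (Fin n × Fin n) (Fin n × Fin n) ℝ}

theorem apply_eq_zero_of_not_iff (hY : SDPFeasible X Y) {i j k l : Fin n}
    (h : ¬(i = j ↔ k = l)) : Y (i, k) (j, l) = 0 := by
  obtain ⟨-, -, -, hcol, hrow, -, -⟩ := hY
  by_cases hij : i = j
  · subst hij
    exact hrow i k l fun hkl => h (iff_of_true rfl hkl)
  · obtain rfl : k = l := by_contra fun hkl => h (iff_of_false hij hkl)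
    exact hcol k i j hij

theorem frobInner_nonneg (hY : SDPFeasible X Y)
    {Z : Matrix (Fin n × Fin n) (Fin n × Fin n) ℝ}
    (hZ : ∀ i j k l, (i = j ↔ k = l) → 0 ≤ Z (i, k) (j, l)) : 0 ≤ frobInner Z Y := by
  have ⟨_, _, _, _, _, hnonneg, _⟩ := hY
  refine Finset.sum_nonneg fun ⟨i, k⟩ _ => Finset.sum_nonneg fun ⟨j, l⟩ _ => ?_
  by_cases h : i = j ↔ k = l
  · exact mul_nonneg (hZ i j k l h) (hnonneg _ _)
  · rw [hY.apply_eq_zero_of_not_iff h, mul_zero]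

theorem frobInner_vecMulVec_le (hY : SDPFeasible X Y)
    {M : Matrix (Fin n × Fin n) (Fin n × Fin n) ℝ} (hM : M ∈ Scone n) :
    frobInner M (vecMulVec (vecM X) (vecM X)) ≤ frobInner M Y := by
  obtain ⟨hpsd, hcol, hrow, -, -, -, hX⟩ := hY
  rw [← sub_nonneg, ← frobInner_sub_right]
  refine frobInner_nonneg_of_mem_Scone hM hpsd (fun k l => ?_) (fun i j => ?_)
  · simp only [Matrix.sub_apply, Finset.sum_sub_distrib, hcol, hX.sum_col_vecMulVec, sub_self]
  · simp only [Matrix.sub_apply, Finset.sum_sub_distrib, hrow, hX.sum_row_vecMulVec, sub_self]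

end SDPFeasible

theorem frobInner_vecMulVec_one (M : Matrix (Fin n × Fin n) (Fin n × Fin n) ℝ) :
    frobInner M (vecMulVec (vecM 1) (vecM 1)) = ∑ i, ∑ j, M (i, i) (j, j) := by
  simpa only [permMatrix_one, Equiv.Perm.one_apply] using frobInner_vecMulVec_permMatrix M 1

theorem sum_diag_le_frobInner_of_mem_Tcone {M : Matrix (Fin n × Fin n) (Fin n × Fin n) ℝ}
    (hM : M ∈ Tcone n) {X : Matrix (Fin n) (Fin n) ℝ} (hX : DS X) :
    ∑ i, ∑ j, M (i, i) (j, j) ≤ frobInner M (vecMulVec (vecM X) (vecM X)) := by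
  rw [← frobInner_vecMulVec_one, frobInner_vecMulVec, frobInner_vecMulVec]
  exact hM X hX

end Relaxation

theorem stmt7_general {n : ℕ} (C Z : Matrix (Fin n × Fin n) (Fin n × Fin n) ℝ)
    (hZ_nonneg : ∀ i j k l, (i = j ↔ k = l) → 0 ≤ Z (i, k) (j, l))
    (hZ_diag : ∀ i j, Z (i, i) (j, j) = 0)
    (hS : C - Z ∈ Scone n)
    (hT : C - Z ∈ Tcone n) :
    SDPFeasible (1 : Matrix (Fin n) (Fin n) ℝ) (vecMulVec (vecM 1) (vecM 1)) ∧
    (∀ X Y, SDPFeasible X Y → ∑ i, ∑ j, C (i, i) (j, j) ≤ frobInner C Y) ∧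
    frobInner C (vecMulVec (vecM 1) (vecM 1)) = ∑ i, ∑ j, C (i, i) (j, j) := by
  refine ⟨?_, fun X Y hY => ?_, frobInner_vecMulVec_one C⟩
  · simpa only [permMatrix_one] using sdpFeasible_permMatrix (n := n) 1
  · have ⟨_, _, _, _, _, _, hX⟩ := hY
    calc ∑ i, ∑ j, C (i, i) (j, j)
        = ∑ i, ∑ j, (C - Z) (i, i) (j, j) := by simp only [Matrix.sub_apply, hZ_diag, sub_zero]
      _ ≤ frobInner (C - Z) (vecMulVec (vecM X) (vecM X)) :=
        sum_diag_le_frobInner_of_mem_Tcone hT hX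
      _ ≤ frobInner (C - Z) Y := hY.frobInner_vecMulVec_le hS
      _ = frobInner C Y - frobInner Z Y := frobInner_sub_left C Z Y
      _ ≤ frobInner C Y := sub_le_self _ (hY.frobInner_nonneg hZ_nonneg)

/-- Proposition 2 (exactness via `𝒮` and `𝒯`): if the identity permutation is optimal
for the QAP and `A⊗B − Z ∈ 𝒮 ∩ 𝒯` for a suitable `Z`, then `(I, vec(I)vec(I)ᵀ)` is
optimal for the SDP relaxation and the optimal values agree. -/
theorem stmt7 {n : ℕ} (A B : Matrix (Fin n) (Fin n) ℝ)
    (hA : A.IsSymm) (hB : B.IsSymm)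
    (hQAP : ∀ σ : Equiv.Perm (Fin n),
      ∑ i, ∑ j, A i j * B (σ i) (σ j) ≥ ∑ i, ∑ j, A i j * B i j)
    (Z : Matrix (Fin n × Fin n) (Fin n × Fin n) ℝ)
    (hZ1 : ∀ i j k l, ((i ≠ j ∧ k ≠ l) ∨ (i = j ∧ k = l)) → 0 ≤ Z (i, k) (j, l))
    (hZ2 : ∀ i j, Z (i, i) (j, j) = 0)
    (hZ3 : kron A B - Z ∈ Scone n)
    (hZ4 : kron A B - Z ∈ Tcone n) :
    SDPFeasible (1 : Matrix (Fin n) (Fin n) ℝ)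
      (vecMulVec (vecM (1 : Matrix (Fin n) (Fin n) ℝ))
        (vecM (1 : Matrix (Fin n) (Fin n) ℝ))) ∧
    (∀ (X : Matrix (Fin n) (Fin n) ℝ)
        (Y : Matrix (Fin n × Fin n) (Fin n × Fin n) ℝ),
      SDPFeasible X Y → sdpObj A B Y ≥ ∑ i, ∑ j, A i j * B i j) ∧
    sdpObj A B (vecMulVec (vecM (1 : Matrix (Fin n) (Fin n) ℝ))
        (vecM (1 : Matrix (Fin n) (Fin n) ℝ))) = ∑ i, ∑ j, A i j * B i j :=
  stmt7_general (kron A B) Z (fun i j k l h => hZ1 i j k l (by tauto)) hZ2 hZ3 hZ4
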